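/- Let β < 0 and let f be a non-constant unbounded solution of equation (1) on [t₀, ∞) satisfying condition (2), such that f is positive at infinity (i.e. f(t) > 0 for all sufficiently large t). Then f(t)^{−β−1}·f''(t) → 0 as t → ∞. -/

import Mathlib

open Filter Topology Set

theorem aux_anti {g g' : ℝ → ℝ} {a : ℝ} (h : ∀ t ∈ Ici a, HasDerivAt g (g' t) t)
    (hn : ∀ t ∈ Ici a, g' t ≤ 0) : AntitoneOn g (Ici a) := by
  apply antitoneOn_of_deriv_nonpos (convex_Ici a)
  · exact fun t ht => (h t ht).continuousAt.continuousWithinAt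
  · intro t ht
    exact (h t (interior_subset ht)).differentiableAt.differentiableWithinAt
  · intro t ht
    rw [(h t (interior_subset ht)).deriv]
    exact hn t (interior_subset ht)

theorem aux_mono {g g' : ℝ → ℝ} {a : ℝ} (h : ∀ t ∈ Ici a, HasDerivAt g (g' t) t)
    (hn : ∀ t ∈ Ici a, 0 ≤ g' t) : MonotoneOn g (Ici a) := by
  apply monotoneOn_of_deriv_nonneg (convex_Ici a)
  · exact fun t ht => (h t ht).continuousAt.continuousWithinAt
  · intro t ht
    exact (h t (interior_subset ht)).differentiableAt.differentiableWithinAt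
  · intro t ht
    rw [(h t (interior_subset ht)).deriv]
    exact hn t (interior_subset ht)

theorem aux_decay {k k' : ℝ → ℝ} (hk : ∀ᶠ t in atTop, HasDerivAt k (k' t) t)
    (h0 : ∀ᶠ t in atTop, 0 ≤ k t)
    (hd : ∀ ε > 0, ∀ᶠ t in atTop, k' t ≤ -k t + ε) : Tendsto k atTop (𝓝 0) := by
  rw [Metric.tendsto_atTop']
  intro ε hε
  obtain ⟨a, ha⟩ := eventually_atTop.1 (hk.and (h0.and (hd (ε/2) (by positivity))))
  have hA : AntitoneOn (fun t => (k t - ε/2) * Real.exp t) (Ici a) := by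
    apply aux_anti (g' := fun t => k' t * Real.exp t + (k t - ε/2) * Real.exp t)
    · intro t ht
      exact ((ha t ht).1.sub_const _).mul (Real.hasDerivAt_exp t)
    · intro t ht
      have := (ha t ht).2.2
      have := Real.exp_pos t
      nlinarith
  have hlim : Tendsto (fun t => ((k a - ε/2) * Real.exp a) * Real.exp (-t)) atTop (𝓝 0) := by
    simpa using (Real.tendsto_exp_neg_atTop_nhds_zero).const_mul ((k a - ε/2) * Real.exp a)
  obtain ⟨b, hb⟩ := eventually_atTop.1 (hlim.eventually (gt_mem_nhds (half_pos hε)))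
  refine ⟨max a b, fun t ht => ?_⟩
  have hat : a ≤ t := (le_max_left a b).trans ht.le
  have h1 := hA (mem_Ici.2 le_rfl) (mem_Ici.2 hat) hat
  have h2 := hb t ((le_max_right a b).trans ht.le)
  have h3 : k t - ε/2 ≤ ((k a - ε/2) * Real.exp a) * Real.exp (-t) := by
    rw [Real.exp_neg, ← div_eq_mul_inv, le_div_iff₀ (Real.exp_pos t)]
    exact h1
  rw [Real.dist_eq, sub_zero, abs_of_nonneg (ha t hat).2.1]
  linarith


/-- Let β < 0 and f be a non-constant unbounded solution of
f''' + f·f'' − β·(f')² = 0 on [t₀, ∞) with f'(t) → 0 at infinity and f positive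
at infinity.  Then f(t)^{−β−1}·f''(t) → 0 as t → ∞. -/
theorem stmt_9 (β : ℝ) (hβ : β < 0) (t₀ : ℝ)
    (f f' f'' f''' : ℝ → ℝ)
    (hf1 : ∀ t ∈ Set.Ici t₀, HasDerivAt f (f' t) t)
    (hf2 : ∀ t ∈ Set.Ici t₀, HasDerivAt f' (f'' t) t)
    (hf3 : ∀ t ∈ Set.Ici t₀, HasDerivAt f'' (f''' t) t)
    (heq : ∀ t ∈ Set.Ici t₀, f''' t + f t * f'' t - β * (f' t) ^ 2 = 0)
    (hnc : ¬ ∃ c : ℝ, ∀ t ∈ Set.Ici t₀, f t = c)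
    (hunb : ¬ ∃ M : ℝ, ∀ t ∈ Set.Ici t₀, |f t| ≤ M)
    (hlim : Filter.Tendsto f' Filter.atTop (nhds 0))
    (hposinf : ∀ᶠ t in Filter.atTop, 0 < f t) :
    Filter.Tendsto (fun t => (f t) ^ (-β - 1) * f'' t) Filter.atTop (nhds 0) := by
  -- antiderivative of f
  have hcont : Continuous (fun t => f (max t t₀)) := by
    rw [continuous_iff_continuousAt]
    intro t
    exact ContinuousAt.comp (f := fun t => max t t₀) (hf1 _ (le_max_right t t₀)).continuousAt
      (by fun_prop)
  have hF : ∀ t ∈ Ici t₀, HasDerivAt (fun u => ∫ x in (0:ℝ)..u, f (max x t₀)) (f t) t := by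
    intro t ht
    have := (hcont.integral_hasStrictDerivAt 0 t).hasDerivAt
    simpa [max_eq_left (mem_Ici.1 ht)] using this
  set F := (fun u => ∫ x in (0:ℝ)..u, f (max x t₀)) with hFdef
  have hp : AntitoneOn (fun t => f'' t * Real.exp (F t)) (Ici t₀) := by
    apply aux_anti (fun t ht => (hf3 t ht).mul (hF t ht).exp)
    intro t ht
    have e := heq t ht
    have e1 := Real.exp_pos (F t)
    have : f''' t * Real.exp (F t) + f'' t * (Real.exp (F t) * f t)
      = β * (f' t)^2 * Real.exp (F t) := by
      linear_combination (Real.exp (F t)) * e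
    rw [this]
    exact mul_nonpos_of_nonpos_of_nonneg
      (mul_nonpos_of_nonpos_of_nonneg hβ.le (sq_nonneg _)) e1.le
  have hex : ∃ t1 ∈ Ici t₀, f'' t1 ≤ 0 := by
    by_contra! hcon
    have m1 := aux_mono hf2 (fun t ht => (hcon t ht).le)
    have n1 : ∀ t ∈ Ici t₀, f' t ≤ 0 := by
      intro t ht
      apply ge_of_tendsto hlim
      filter_upwards [eventually_ge_atTop t] with s hs
      exact m1 ht (le_trans (mem_Ici.1 ht) hs) hs
    have m2 := aux_anti hf1 n1
    apply hunb
    refine ⟨f t₀, fun t ht => ?_⟩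
    have u := m2 (mem_Ici.2 le_rfl) ht ht
    obtain ⟨s, hs, hs'⟩ := (hposinf.and (eventually_ge_atTop t)).exists
    have v := m2 ht (le_trans (mem_Ici.1 ht) hs') hs'
    rw [abs_le]; constructor <;> linarith
  obtain ⟨t1, ht1, h1⟩ := hex
  rw [mem_Ici] at ht1
  have hneg : ∀ t ∈ Ici t1, f'' t ≤ 0 := by
    intro t ht
    have := hp ht1 (le_trans ht1 ht) ht
    simp only at this
    have e1 := Real.exp_pos (F t)
    have e2 := Real.exp_pos (F t1)
    by_contra! hc
    have := mul_pos hc e1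
    have := mul_nonpos_of_nonpos_of_nonneg h1 e2.le
    linarith
  have ma := aux_anti (fun t ht => hf2 t (le_trans ht1 ht)) hneg
  have hg : ∀ t ∈ Ici t1, 0 ≤ f' t := by
    intro t ht
    apply le_of_tendsto hlim
    filter_upwards [eventually_ge_atTop t] with s hs
    exact ma ht (le_trans (mem_Ici.1 ht) hs) hs
  have mf := aux_mono (fun t ht => hf1 t (le_trans ht1 ht)) hg
  have htop : Tendsto f atTop atTop := by
    rw [tendsto_atTop]
    intro M
    obtain ⟨B, hB⟩ := (isCompact_Icc (a := t₀) (b := t1)).exists_bound_of_continuousOn (f := f)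
      (fun t ht => (hf1 t ht.1).continuousAt.continuousWithinAt)
    have : ∃ s ∈ Ici t1, M ≤ f s := by
      by_contra! hc
      apply hunb
      refine ⟨max B (max M (-f t1)), fun t ht => ?_⟩
      rcases le_total t t1 with h | h
      · exact (hB t ⟨ht, h⟩).trans (le_max_left _ _)
      · refine le_trans ?_ (le_max_right _ _)
        rw [abs_le']
        have := mf (mem_Ici.2 le_rfl) h h
        exact ⟨(hc t h).le.trans (le_max_left _ _),
          le_trans (by linarith) (le_max_right _ _)⟩
    obtain ⟨s, hs, hs'⟩ := this
    filter_upwards [eventually_ge_atTop s] with t ht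
    exact hs'.trans (mf hs (le_trans (mem_Ici.1 hs) ht) ht)
  obtain ⟨t2, ht2⟩ := eventually_atTop.1 ((htop.eventually_ge_atTop 2).and (eventually_ge_atTop t1))
  have F2 : ∀ t ∈ Ici t2, 2 ≤ f t := fun t ht => (ht2 t ht).1
  have T1 : ∀ t ∈ Ici t2, t ∈ Ici t1 := fun t ht => (ht2 t ht).2
  have T0 : ∀ t ∈ Ici t2, t ∈ Ici t₀ := fun t ht => le_trans ht1 (T1 t ht)
  obtain ⟨γ, rfl⟩ : ∃ γ, β = -γ := ⟨-β, by ring⟩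
  have hγ : 0 < γ := by linarith
  rw [neg_neg]
  have hsmall : ∀ c : ℝ, ∀ ε > 0, ∀ᶠ t in atTop, c * f' t ≤ ε := by
    intro c ε hε
    have : Tendsto (fun t => c * f' t) atTop (𝓝 0) := by simpa using hlim.const_mul c
    exact (this.eventually (gt_mem_nhds hε)).mono fun t h => le_of_lt h
  rcases le_total γ 1 with hγ1 | hγ1
  · have hh : Tendsto (fun t => - f'' t) atTop (𝓝 0) := by
      apply aux_decay (k' := fun t => - f''' t)
      · filter_upwards [eventually_ge_atTop t2] with t ht
        exact (hf3 t (T0 t ht)).neg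
      · filter_upwards [eventually_ge_atTop t2] with t ht
        linarith [hneg t (T1 t ht)]
      · intro ε hε
        filter_upwards [eventually_ge_atTop t2, hsmall γ ε hε, hsmall 1 1 one_pos] with t ht a b
        have e := heq t (T0 t ht)
        have := F2 t ht
        have n := hneg t (T1 t ht)
        have p := hg t (T1 t ht)
        have q1 : γ * f' t * f' t ≤ γ * f' t * 1 :=
          mul_le_mul_of_nonneg_left (by linarith) (by positivity)
        have q2 : 0 ≤ (f t - 1) * (- f'' t) := mul_nonneg (by linarith) (by linarith)
        nlinarith
    have hh' : Tendsto f'' atTop (𝓝 0) := by simpa using hh.neg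
    have hn : Tendsto (fun t => ‖f'' t‖) atTop (𝓝 0) := by simpa using hh'.norm
    refine squeeze_zero_norm' ?_ hn
    filter_upwards [eventually_ge_atTop t2] with t ht
    have := F2 t ht
    rw [norm_mul]
    have : ‖f t ^ (γ - 1)‖ ≤ 1 := by
      rw [Real.norm_of_nonneg (by positivity)]
      exact Real.rpow_le_one_of_one_le_of_nonpos (by linarith) (by linarith)
    nlinarith [norm_nonneg (f'' t)]
  · have R1 : ∀ t ∈ Ici t2, f t ^ (γ - 1) = f t ^ (γ - 1 - 1) * f t := by
      intro t ht
      have := F2 t ht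
      rw [← Real.rpow_add_one (by linarith)]; congr 1; ring
    have R2 : ∀ t ∈ Ici t2, f t ^ γ = f t ^ (γ - 1 - 1) * f t * f t := by
      intro t ht
      have := F2 t ht
      rw [← R1 t ht, ← Real.rpow_add_one (by linarith)]; congr 1; ring
    have D1 : ∀ t ∈ Ici t2, HasDerivAt (fun t => f t ^ (γ-1))
        (f' t * (γ - 1) * f t ^ (γ - 1 - 1)) t := fun t ht =>
      (hf1 t (T0 t ht)).rpow_const (Or.inl (by linarith [F2 t ht]))
    have D2 : ∀ t ∈ Ici t2, HasDerivAt (fun t => f t ^ γ)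
        (f' t * γ * f t ^ (γ - 1)) t := fun t ht =>
      (hf1 t (T0 t ht)).rpow_const (Or.inl (by linarith [F2 t ht]))
    have hE : AntitoneOn (fun t => f t ^ γ * f' t + f t ^ (γ-1) * f'' t) (Ici t2) := by
      apply aux_anti (fun t ht => ((D2 t ht).mul (hf2 t (T0 t ht))).add
        ((D1 t ht).mul (hf3 t (T0 t ht))))
      intro t ht
      have e := heq t (T0 t ht)
      have f2 := F2 t ht
      have n := hneg t (T1 t ht)
      have p := hg t (T1 t ht)
      rw [R1 t ht, R2 t ht]
      have apos : 0 < f t ^ (γ - 1 - 1) := by positivity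
      generalize f t ^ (γ - 1 - 1) = a at *
      have e2 : f' t * γ * (a * f t) * f' t + a * f t * f t * f'' t +
        (f' t * (γ - 1) * a * f'' t + a * f t * f''' t) = ((γ-1) * a * f' t) * f'' t := by
        linear_combination a * f t * e
      rw [e2]
      exact mul_nonpos_of_nonneg_of_nonpos
        (mul_nonneg (mul_nonneg (by linarith) apos.le) p) n
    obtain ⟨C, hC0, hC⟩ : ∃ C, 0 ≤ C ∧ ∀ t ∈ Ici t2,
        f t ^ γ * f' t + f t ^ (γ-1) * f'' t ≤ C :=
      ⟨max 0 _, le_max_left _ _, fun t ht =>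
        (hE (mem_Ici.2 le_rfl) ht ht).trans (le_max_right _ _)⟩
    have hk : Tendsto (fun t => -(f t ^ (γ-1) * f'' t)) atTop (𝓝 0) := by
      apply aux_decay (k' := fun t => -(f' t * (γ - 1) * f t ^ (γ - 1 - 1) * f'' t
        + f t ^ (γ-1) * f''' t))
      · filter_upwards [eventually_ge_atTop t2] with t ht
        exact ((D1 t ht).mul (hf3 t (T0 t ht))).neg
      · filter_upwards [eventually_ge_atTop t2] with t ht
        have := F2 t ht
        have n := hneg t (T1 t ht)
        have : 0 < f t ^ (γ-1) := by positivity
        nlinarith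
      · intro ε hε
        filter_upwards [eventually_ge_atTop t2, hsmall (γ * C) ε hε,
          hsmall (2 * γ) 1 one_pos] with t ht s1 s2
        have c := hC t ht
        have e := heq t (T0 t ht)
        have f2 := F2 t ht
        have n := hneg t (T1 t ht)
        have p := hg t (T1 t ht)
        rw [R1 t ht, R2 t ht] at c
        rw [R1 t ht]
        have apos : 0 < f t ^ (γ - 1 - 1) := by positivity
        generalize f t ^ (γ - 1 - 1) = a at *
        have e2 : -(f' t * (γ - 1) * a * f'' t + a * f t * f''' t)
          = (γ-1) * f' t * (a * (- f'' t)) - f t * (a * f t * (- f'' t))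
            + γ * f' t * (a * f t * f' t) := by
          linear_combination - a * f t * e
        have k0 : 0 ≤ a * f t * (- f'' t) :=
          mul_nonneg (by positivity) (by linarith)
        have k1 : a * (- f'' t) ≤ a * f t * (- f'' t) := by
          have := mul_nonneg (mul_nonneg apos.le (by linarith : 0 ≤ f t - 1))
            (by linarith : 0 ≤ - f'' t)
          linarith
        have k2 : a * f t * f' t ≤ C + a * f t * (- f'' t) := by
          have := mul_nonneg (mul_nonneg (by positivity : 0 ≤ a * f t)
            (by linarith : 0 ≤ f t - 1)) p
          linarith
        have j1 := mul_le_mul_of_nonneg_left k1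
          (mul_nonneg (by linarith : 0 ≤ γ - 1) p)
        have j2 := mul_le_mul_of_nonneg_left k2 (mul_nonneg hγ.le p)
        rw [e2]
        have e3 : -(a * f t * f'' t) = a * f t * (- f'' t) := by ring
        rw [e3]
        generalize a * f t * (- f'' t) = k at *
        have j3 : 0 ≤ k * (1 - 2 * γ * f' t) := mul_nonneg k0 (by linarith)
        have j4 : 0 ≤ k * (f t - 2) := mul_nonneg k0 (by linarith)
        have j5 : 0 ≤ k * f' t := mul_nonneg k0 p
        linarith
    simpa using hk.neg
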